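/- Let M be a linear discounted MDP on (S, A) with feature map φ : S×A → ℝ^d, discount γ ∈ (0,1), reward distributions q_M(s,a) that are probability measures supported on [0,1] with means r_M(s,a), and a unique optimal policy π*_M (for every s, Q*_M(s,·) has a unique maximizer), with suboptimality gap Δ(M). Let ε > 0 and let ω be a probability vector on S×A such that Λ(ω) is invertible. Then for every linear discounted MDP M' on (S, A) with the same feature map φ and discount γ, with reward distributions q_{M'}(s,a) supported on [0,1], such that π*_M is not ε-optimal for M', it holds that Σ_{(s,a)∈S×A} ω(s,a)·KL_{M|M'}(s,a) ≥ 3(1−γ)⁴·(Δ(M)+ε)² / (10·σ(ω)). -/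

import Mathlib

/-!
The divergence between `M` and `M'` is bounded below through the one-step Bellman error
`g(s,a) = r(s,a) - r'(s,a) + γ ∑ (p - p')(s,a,s') V*(s')`, where `V*` is the optimal value of `M`.

* If `π*` is not `ε`-optimal for `M'`, take the state `s` maximizing `V'* - V'^{π*}`. A contraction
  argument shows that an action `a` optimal for `M'` at `s` differs from `π*(s)`, so
  `Δ + ε ≤ (V* - V'^{π*})(s) + (Q'* - Q*)(s,a)`. Both differences solve Bellman-type recursions
  of `M'` driven by `± g`, hence each is at most `max |g| / (1 - γ)`
  (`gap_add_le_bellman_error`).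
* By linearity `g(s,a) = φ(s,a)ᵀ x` for some `x`, and the Cauchy–Schwarz inequality in the metric
  `Λ(ω)` gives `max g² ≤ σ(ω) ∑ ω g²` (`sq_dotProduct_le_design`).
* The Donsker–Varadhan inequality and Hoeffding's lemma give `2 (∫ X dα - ∫ X dβ)² ≤ B² KL(α‖β)`
  for `X` with values in `[0, B]`. With `B = 1` for rewards, `B = 1/(1-γ)` for `V*`, and
  `(1-γ)² + γ² ≤ 1`, this yields `2 (1-γ)² g² ≤ KL` pointwise (`sq_add_le_kl`).

Together these give the bound with constant `1/2`, which is at least `3/10`.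
-/

open Matrix Finset MeasureTheory
open scoped Classical

/-- Kullback–Leibler divergence between measures: `∫ log (dα/dβ) dα` when `α ≪ β` (and the
log-likelihood ratio is integrable), `+∞` otherwise. -/
noncomputable def klDiv {Ω : Type*} [MeasurableSpace Ω] (α β : Measure Ω) : EReal :=
  if α ≪ β ∧ Integrable (llr α β) α then ((∫ x, llr α β x ∂α : ℝ) : EReal) else ⊤

/-- Kullback–Leibler divergence between probability vectors on a finite set. -/
noncomputable def klFin {S : Type*} [Fintype S] (p q : S → ℝ) : EReal :=
  if ∀ s, q s = 0 → p s = 0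
  then ((∑ s, p s * Real.log (p s / q s) : ℝ) : EReal) else ⊤

/-! ### Mean differences and Kullback–Leibler divergence -/

/-- Hoeffding's lemma, as a bound on the non-centred log-moment-generating function. -/
lemma log_integral_exp_le {Ω : Type*} [MeasurableSpace Ω] (β : Measure Ω) [IsProbabilityMeasure β]
    (X : Ω → ℝ) (hX : AEMeasurable X β) (B : ℝ) (hB : ∀ᵐ x ∂β, X x ∈ Set.Icc 0 B) (t : ℝ) :
    Real.log (∫ x, Real.exp (t * X x) ∂β) ≤ t * (∫ x, X x ∂β) + B ^ 2 * t ^ 2 / 8 := by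
  have h := (ProbabilityTheory.hasSubgaussianMGF_of_mem_Icc hX hB).mgf_le t
  unfold ProbabilityTheory.mgf at h
  set m := ∫ x, X x ∂β
  have h1 : (∫ x, Real.exp (t * (X x - m)) ∂β)
      = Real.exp (-(t * m)) * ∫ x, Real.exp (t * X x) ∂β := by
    rw [← integral_const_mul]
    congr 1 with x
    rw [← Real.exp_add]
    ring_nf
  rw [h1] at h
  have hpos : 0 < ∫ x, Real.exp (t * X x) ∂β :=
    integral_exp_pos (ProbabilityTheory.integrable_exp_mul_of_mem_Icc hX hB)
  have h2 := Real.log_le_log (by positivity) h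
  rw [Real.log_exp, Real.log_mul (Real.exp_pos _).ne' hpos.ne', Real.log_exp] at h2
  have h3 : ((((‖B - 0‖₊ / 2) ^ 2 : NNReal) : ℝ)) = B ^ 2 / 4 := by
    push_cast
    rw [sub_zero, Real.norm_eq_abs, div_pow, sq_abs]
    norm_num
  rw [h3] at h2
  linarith

/-- Optimization over `t` in the quadratic lower bound `k ≥ t δ - B² t² / 8`; the optimum is
`t = 4 δ / B²`. -/
lemma two_mul_sq_le_of_forall {k δ B : ℝ} (hB : 0 < B)
    (h : ∀ t : ℝ, t * δ - B ^ 2 * t ^ 2 / 8 ≤ k) : 2 * δ ^ 2 / B ^ 2 ≤ k := by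
  have h1 := h (4 * δ / B ^ 2)
  have h2 : 4 * δ / B ^ 2 * δ - B ^ 2 * (4 * δ / B ^ 2) ^ 2 / 8 = 2 * δ ^ 2 / B ^ 2 := by
    field_simp
    ring
  rwa [h2] at h1

lemma sq_mean_sub_le_klDiv (α β : Measure ℝ) [IsProbabilityMeasure α] [IsProbabilityMeasure β]
    (hα : α (Set.Icc (0 : ℝ) 1)ᶜ = 0) (hβ : β (Set.Icc (0 : ℝ) 1)ᶜ = 0) :
    ((2 * ((∫ x, x ∂α) - ∫ x, x ∂β) ^ 2 : ℝ) : EReal) ≤ klDiv α β := by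
  unfold klDiv
  split_ifs with h
  swap
  · exact le_top
  obtain ⟨hac, hint⟩ := h
  rw [EReal.coe_le_coe_iff]
  have hα' : ∀ᵐ x ∂α, x ∈ Set.Icc (0 : ℝ) 1 := hα
  have hβ' : ∀ᵐ x ∂β, x ∈ Set.Icc (0 : ℝ) 1 := hβ
  have key := two_mul_sq_le_of_forall (k := ∫ x, llr α β x ∂α)
    (δ := (∫ x, x ∂α) - ∫ x, x ∂β) one_pos (fun t => ?_)
  · simpa using key
  have hfα : Integrable (fun x : ℝ => t * x) α :=
    (Integrable.of_mem_Icc 0 1 aemeasurable_id hα').const_mul t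
  have hfβ : Integrable (fun x : ℝ => Real.exp (t * x)) β :=
    ProbabilityTheory.integrable_exp_mul_of_mem_Icc aemeasurable_id hβ'
  have := isProbabilityMeasure_tilted hfβ
  -- Gibbs' inequality for `α` against the exponentially tilted `β` is Donsker–Varadhan.
  have hg := InformationTheory.integral_llr_add_sub_measure_univ_nonneg
    (hac.trans (absolutelyContinuous_tilted hfβ))
    (integrable_llr_tilted_right hac hfα hint hfβ)
  rw [integral_llr_tilted_right hac hfα hfβ hint, integral_const_mul] at hg
  have hh := log_integral_exp_le β id aemeasurable_id 1 hβ' t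
  simp only [probReal_univ, id] at hg hh
  linarith

/-- Hoeffding's lemma for a probability vector on a finite set. -/
lemma log_sum_exp_le {S : Type*} [Fintype S] (q V : S → ℝ) (hq0 : ∀ s, 0 ≤ q s)
    (hq1 : ∑ s, q s = 1) (B : ℝ) (hV : ∀ s, V s ∈ Set.Icc 0 B) (t : ℝ) :
    Real.log (∑ s, q s * Real.exp (t * V s)) ≤ t * (∑ s, q s * V s) + B ^ 2 * t ^ 2 / 8 := by
  let _ : MeasurableSpace S := ⊤
  let β : Measure S := ∑ s, ENNReal.ofReal (q s) • Measure.dirac s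
  have hβ : IsProbabilityMeasure β := ⟨by
    simp only [β, Measure.coe_finsetSum, Finset.sum_apply, Measure.smul_apply, measure_univ,
      smul_eq_mul, mul_one]
    rw [← ENNReal.ofReal_sum_of_nonneg (fun s _ => hq0 s), hq1, ENNReal.ofReal_one]⟩
  have hsum : ∀ f : S → ℝ, ∫ x, f x ∂β = ∑ s, q s * f s := by
    intro f
    simp only [β]
    rw [integral_finsetSum_measure]
    · refine Finset.sum_congr rfl fun s _ => ?_
      rw [integral_smul_measure, integral_dirac, ENNReal.toReal_ofReal (hq0 s), smul_eq_mul]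
    · intro s _
      exact (integrable_dirac (by simp)).smul_measure ENNReal.ofReal_ne_top
  have h := log_integral_exp_le β V (measurable_from_top).aemeasurable B
    (Filter.Eventually.of_forall hV) t
  rwa [hsum, hsum] at h

/-- The Donsker–Varadhan inequality for probability vectors. -/
lemma donsker_varadhan_fin {S : Type*} [Fintype S] (p q f : S → ℝ) (hp0 : ∀ s, 0 ≤ p s)
    (hp1 : ∑ s, p s = 1) (hq0 : ∀ s, 0 ≤ q s) (hac : ∀ s, q s = 0 → p s = 0) :
    (∑ s, p s * f s) - Real.log (∑ s, q s * Real.exp (f s))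
      ≤ ∑ s, p s * Real.log (p s / q s) := by
  set Z := ∑ s, q s * Real.exp (f s) with hZ
  have hZpos : 0 < Z := by
    refine Finset.sum_pos' (fun s _ => mul_nonneg (hq0 s) (Real.exp_pos _).le) ?_
    by_contra! hcon
    have : ∑ s, p s = 0 := Finset.sum_eq_zero fun s _ => hac s (by
      have := hcon s (Finset.mem_univ s)
      have h2 := Real.exp_pos (f s)
      nlinarith [hq0 s])
    linarith
  have hterm : ∀ s, p s * f s - p s * Real.log Z - p s * Real.log (p s / q s)
      ≤ q s * Real.exp (f s) / Z - p s := by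
    intro s
    rcases (hp0 s).eq_or_lt with h0 | hpos
    · rw [← h0]
      have := mul_nonneg (hq0 s) (Real.exp_pos (f s)).le
      simp only [zero_mul, sub_zero]
      positivity
    have hqpos : 0 < q s := lt_of_le_of_ne (hq0 s) fun h => hpos.ne' (hac s h.symm)
    have hl := Real.log_le_sub_one_of_pos (x := q s * Real.exp (f s) / (Z * p s)) (by positivity)
    rw [Real.log_div (by positivity) (by positivity), Real.log_mul hqpos.ne' (Real.exp_pos _).ne',
      Real.log_mul hZpos.ne' hpos.ne', Real.log_exp] at hl
    rw [Real.log_div hpos.ne' hqpos.ne']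
    have h2 := mul_le_mul_of_nonneg_left hl hpos.le
    have h3 : p s * (q s * Real.exp (f s) / (Z * p s) - 1) = q s * Real.exp (f s) / Z - p s := by
      field_simp
    rw [h3] at h2
    linarith
  have hs := Finset.sum_le_sum fun s (_ : s ∈ Finset.univ) => hterm s
  simp only [Finset.sum_sub_distrib, ← Finset.sum_mul, ← Finset.sum_div, hp1] at hs
  rw [← hZ, div_self hZpos.ne'] at hs
  linarith

lemma sq_mean_sub_le_klFin {S : Type*} [Fintype S] (p q V : S → ℝ) (hp0 : ∀ s, 0 ≤ p s)
    (hp1 : ∑ s, p s = 1) (hq0 : ∀ s, 0 ≤ q s) (hq1 : ∑ s, q s = 1) (B : ℝ) (hB : 0 < B)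
    (hV : ∀ s, V s ∈ Set.Icc 0 B) :
    ((2 * (∑ s, (p s - q s) * V s) ^ 2 / B ^ 2 : ℝ) : EReal) ≤ klFin p q := by
  unfold klFin
  split_ifs with h
  swap
  · exact le_top
  rw [EReal.coe_le_coe_iff]
  refine two_mul_sq_le_of_forall hB fun t => ?_
  have h1 := donsker_varadhan_fin p q (fun s => t * V s) hp0 hp1 hq0 h
  have h2 := log_sum_exp_le q V hq0 hq1 B hV t
  have h3 : ∑ s, p s * (t * V s) = t * ∑ s, p s * V s := by
    rw [Finset.mul_sum]
    exact Finset.sum_congr rfl fun s _ => by ring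
  simp only [sub_mul, Finset.sum_sub_distrib]
  linarith

/-- Pointwise lower bound on `KL_{M|M'}(s,a)` by the squared one-step Bellman error. -/
lemma sq_add_le_kl {S : Type*} [Fintype S] {γ : ℝ} (hγ : γ ∈ Set.Ioo (0 : ℝ) 1)
    (α β : Measure ℝ) [IsProbabilityMeasure α] [IsProbabilityMeasure β]
    (hα : α (Set.Icc (0 : ℝ) 1)ᶜ = 0) (hβ : β (Set.Icc (0 : ℝ) 1)ᶜ = 0)
    (p q V : S → ℝ) (hp0 : ∀ s, 0 ≤ p s)
    (hp1 : ∑ s, p s = 1) (hq0 : ∀ s, 0 ≤ q s) (hq1 : ∑ s, q s = 1)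
    (hV : ∀ s, V s ∈ Set.Icc 0 (1 - γ)⁻¹) :
    ((2 * (1 - γ) ^ 2 * ((∫ x, x ∂α) - (∫ x, x ∂β) + γ * ∑ s, (p s - q s) * V s) ^ 2 : ℝ) : EReal)
      ≤ klDiv α β + klFin p q := by
  have h0 : 0 < 1 - γ := by linarith [hγ.2]
  refine le_trans ?_ (add_le_add (sq_mean_sub_le_klDiv α β hα hβ)
    (sq_mean_sub_le_klFin p q V hp0 hp1 hq0 hq1 _ (inv_pos.2 h0) hV))
  rw [← EReal.coe_add, EReal.coe_le_coe_iff]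
  generalize (∫ x, x ∂α) - (∫ x, x ∂β) = a
  generalize ∑ s, (p s - q s) * V s = b
  rw [inv_pow, div_inv_eq_mul]
  -- Cauchy–Schwarz with weights `1 - γ` and `γ`, using `(1 - γ)² + γ² ≤ 1`.
  have hcs : (a * (1 - γ) + γ * (b * (1 - γ))) ^ 2
      ≤ ((1 - γ) ^ 2 + γ ^ 2) * (a ^ 2 + (b * (1 - γ)) ^ 2) := by
    nlinarith [sq_nonneg (a * γ - (b * (1 - γ)) * (1 - γ))]
  have hle : (1 - γ) ^ 2 + γ ^ 2 ≤ 1 := by nlinarith [hγ.1]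
  have h2 := mul_le_mul_of_nonneg_right hle
    (by positivity : 0 ≤ a ^ 2 + (b * (1 - γ)) ^ 2)
  nlinarith

/-! ### Cauchy–Schwarz for the design matrix -/

lemma sq_dotProduct_le_design {ι : Type*} [Fintype ι] {d : ℕ} (φ : ι → Fin d → ℝ) (ω : ι → ℝ)
    (hω0 : ∀ i, 0 ≤ ω i) (Λ : Matrix (Fin d) (Fin d) ℝ)
    (hΛ : Λ = ∑ i, ω i • vecMulVec (φ i) (φ i)) (hinv : IsUnit Λ) (v x : Fin d → ℝ) :
    (v ⬝ᵥ x) ^ 2 ≤ (v ⬝ᵥ Λ⁻¹.mulVec v) * ∑ i, ω i * (φ i ⬝ᵥ x) ^ 2 := by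
  set y := Λ⁻¹.mulVec v with hy
  have hv : Λ.mulVec y = v := by
    rw [hy, mulVec_mulVec, mul_nonsing_inv _ ((isUnit_iff_isUnit_det _).1 hinv), one_mulVec]
  have hform : ∀ z, v ⬝ᵥ z = ∑ i, ω i * (φ i ⬝ᵥ y) * (φ i ⬝ᵥ z) := by
    intro z
    rw [← hv, hΛ, sum_mulVec, sum_dotProduct]
    refine Finset.sum_congr rfl fun i _ => ?_
    rw [smul_mulVec, vecMulVec_mulVec]
    simp [mul_assoc]
  have hvy : v ⬝ᵥ y = ∑ i, ω i * (φ i ⬝ᵥ y) ^ 2 := by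
    rw [hform]
    exact Finset.sum_congr rfl fun i _ => by ring
  rw [hvy, hform x]
  refine Finset.sum_sq_le_sum_mul_sum_of_sq_le_mul _ (fun i _ => ?_) (fun i _ => ?_)
    (fun i _ => le_of_eq (by ring))
  · exact mul_nonneg (hω0 i) (sq_nonneg _)
  · exact mul_nonneg (hω0 i) (sq_nonneg _)

/-! ### Bellman recursions -/

/-- A function dominated by `c + γ P f` with `P` stochastic is at most `c / (1 - γ)`. -/
lemma bellman_le {S : Type*} [Fintype S] [Nonempty S] {γ : ℝ} (hγ : γ ∈ Set.Ioo (0 : ℝ) 1)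
    (P : S → S → ℝ) (hP0 : ∀ s s', 0 ≤ P s s') (hP1 : ∀ s, ∑ s', P s s' = 1) (f : S → ℝ) (c : ℝ)
    (h : ∀ s, f s ≤ c + γ * ∑ s', P s s' * f s') (s : S) : (1 - γ) * f s ≤ c := by
  obtain ⟨m, hm⟩ := Finite.exists_max f
  have h1 : ∑ s', P m s' * f s' ≤ f m := by
    calc ∑ s', P m s' * f s' ≤ ∑ s', P m s' * f m :=
          Finset.sum_le_sum fun s' _ => mul_le_mul_of_nonneg_left (hm s') (hP0 _ _)
      _ = f m := by rw [← Finset.sum_mul, hP1, one_mul]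
  have h2 := mul_le_mul_of_nonneg_left h1 hγ.1.le
  have h3 : (1 - γ) * f s ≤ (1 - γ) * f m :=
    mul_le_mul_of_nonneg_left (hm s) (by linarith [hγ.2])
  linarith [h m]

/-- If `π` is optimal for `M` and not `ε`-optimal for `M'`, then the gap plus `ε` is controlled by
any uniform bound `G` on the one-step Bellman error. -/
lemma gap_add_le_bellman_error {S A : Type*} [Fintype S] [Fintype A] [Nonempty S] [Nonempty A]
    {γ : ℝ} (hγ : γ ∈ Set.Ioo (0 : ℝ) 1) {ε : ℝ} (hε : 0 < ε)
    (p p' : S → A → S → ℝ) (r r' : S → A → ℝ)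
    (hp'0 : ∀ s a s', 0 ≤ p' s a s') (hp'1 : ∀ s a, ∑ s', p' s a s' = 1)
    (V : S → ℝ) (Q : S → A → ℝ)
    (hQ : ∀ s a, Q s a = r s a + γ * ∑ s', p s a s' * V s')
    (hQV : ∀ s a, Q s a ≤ V s) (π : S → A) (hVπ : ∀ s, V s = Q s (π s))
    (Δ : ℝ) (hΔ : ∀ s a, a ≠ π s → Δ ≤ V s - Q s a)
    (V' : S → ℝ) (Q' : S → A → ℝ)
    (hQ' : ∀ s a, Q' s a = r' s a + γ * ∑ s', p' s a s' * V' s')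
    (hV' : ∀ s, ∃ a, V' s = Q' s a)
    (Vπ : S → ℝ) (hVpi : ∀ s, Vπ s = r' s (π s) + γ * ∑ s', p' s (π s) s' * Vπ s')
    (hnot : ¬ ∀ s, V' s - ε ≤ Vπ s)
    (G : ℝ) (hG : ∀ s a, |r s a - r' s a + γ * ∑ s', (p s a s' - p' s a s') * V s'| ≤ G) :
    (1 - γ) * (Δ + ε) ≤ 2 * G := by
  have h0 : 0 < 1 - γ := by linarith [hγ.2]
  simp only [sub_mul, Finset.sum_sub_distrib, abs_le] at hG
  obtain ⟨s, hs⟩ := Finite.exists_max fun s => V' s - Vπ s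
  obtain ⟨s₀, hs₀⟩ := not_forall.1 hnot
  have hgap : ε < V' s - Vπ s := by
    have := hs s₀
    linarith [not_le.1 hs₀]
  obtain ⟨a, ha⟩ := hV' s
  have hne : a ≠ π s := by
    rintro rfl
    have h1 : ∑ s', p' s (π s) s' * (V' s' - Vπ s') ≤ V' s - Vπ s := by
      calc ∑ s', p' s (π s) s' * (V' s' - Vπ s')
          ≤ ∑ s', p' s (π s) s' * (V' s - Vπ s) :=
            Finset.sum_le_sum fun s' _ => mul_le_mul_of_nonneg_left (hs s') (hp'0 _ _ _)
        _ = V' s - Vπ s := by rw [← Finset.sum_mul, hp'1, one_mul]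
    have h2 := mul_le_mul_of_nonneg_left h1 hγ.1.le
    simp only [mul_sub, Finset.sum_sub_distrib] at h2
    have h3 := hVpi s
    have h4 := hQ' s (π s)
    nlinarith
  have hW : (1 - γ) * (V s - Vπ s) ≤ G := by
    refine bellman_le hγ (fun s => p' s (π s)) (fun _ _ => hp'0 _ _ _) (fun _ => hp'1 _ _)
      (fun s => V s - Vπ s) G (fun u => ?_) s
    simp only [mul_sub, Finset.sum_sub_distrib]
    have h1 := (hG u (π u)).2
    have h2 := hVpi u
    have h3 := hVπ u
    rw [hQ] at h3
    linarith
  have hD : ∀ u, (1 - γ) * (V' u - V u) ≤ G := by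
    choose b hb using hV'
    refine bellman_le hγ (fun s => p' s (b s)) (fun _ _ => hp'0 _ _ _) (fun _ => hp'1 _ _)
      (fun s => V' s - V s) G (fun u => ?_)
    simp only [mul_sub, Finset.sum_sub_distrib]
    have h1 := (hG u (b u)).1
    have h2 := hb u
    rw [hQ'] at h2
    have h3 := hQV u (b u)
    rw [hQ] at h3
    linarith
  have hQQ : (1 - γ) * (Q' s a - Q s a) ≤ G := by
    have h1 := (hG s a).1
    have h2 : (1 - γ) * ∑ s', p' s a s' * (V' s' - V s') ≤ G := by
      calc (1 - γ) * ∑ s', p' s a s' * (V' s' - V s')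
          = ∑ s', p' s a s' * ((1 - γ) * (V' s' - V s')) := by
            rw [Finset.mul_sum]
            exact Finset.sum_congr rfl fun _ _ => by ring
        _ ≤ ∑ s', p' s a s' * G :=
            Finset.sum_le_sum fun s' _ => mul_le_mul_of_nonneg_left (hD s') (hp'0 _ _ _)
        _ = G := by rw [← Finset.sum_mul, hp'1, one_mul]
    have h3 := mul_le_mul_of_nonneg_left h2 hγ.1.le
    have h4 : Q' s a - Q s a ≤ G + γ * ∑ s', p' s a s' * (V' s' - V s') := by
      simp only [mul_sub, Finset.sum_sub_distrib]
      rw [hQ, hQ']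
      linarith
    have h5 := mul_le_mul_of_nonneg_left h4 h0.le
    linarith
  have h1 := hΔ s a hne
  have h2 : Δ + ε ≤ (V s - Vπ s) + (Q' s a - Q s a) := by linarith
  have h3 := mul_le_mul_of_nonneg_left h2 h0.le
  linarith

/-- The value of a policy with rewards in `[0,1]` lies in `[0, 1/(1-γ)]`. -/
lemma value_mem_Icc {S : Type*} [Fintype S] [Nonempty S] {γ : ℝ} (hγ : γ ∈ Set.Ioo (0 : ℝ) 1)
    (P : S → S → ℝ) (hP0 : ∀ s s', 0 ≤ P s s') (hP1 : ∀ s, ∑ s', P s s' = 1) (ρ V : S → ℝ)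
    (hρ : ∀ s, ρ s ∈ Set.Icc (0 : ℝ) 1) (hV : ∀ s, V s = ρ s + γ * ∑ s', P s s' * V s') (s : S) :
    V s ∈ Set.Icc 0 (1 - γ)⁻¹ := by
  have h0 : 0 < 1 - γ := by linarith [hγ.2]
  constructor
  · have h := bellman_le hγ P hP0 hP1 (fun s => -V s) 0 (fun u => by
      simp only [mul_neg, Finset.sum_neg_distrib]
      linarith [hV u, (hρ u).1]) s
    nlinarith
  · have h := bellman_le hγ P hP0 hP1 V 1 (fun u => by linarith [hV u, (hρ u).2]) s
    rw [← one_div, le_div_iff₀ h0]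
    linarith

lemma mean_mem_Icc (α : Measure ℝ) [IsProbabilityMeasure α]
    (hα : α (Set.Icc (0 : ℝ) 1)ᶜ = 0) : (∫ x, x ∂α) ∈ Set.Icc (0 : ℝ) 1 := by
  have h : ∀ᵐ x ∂α, x ∈ Set.Icc (0 : ℝ) 1 := hα
  have hint : Integrable (fun x : ℝ => x) α := Integrable.of_mem_Icc 0 1 aemeasurable_id h
  constructor
  · exact integral_nonneg_of_ae (by filter_upwards [h] with x hx using hx.1)
  · have := integral_mono_ae hint (integrable_const (1 : ℝ))
      (by filter_upwards [h] with x hx using hx.2)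
    simpa using this

lemma ereal_coe_sum {ι : Type*} (s : Finset ι) (f : ι → ℝ) :
    ((∑ i ∈ s, f i : ℝ) : EReal) = ∑ i ∈ s, (f i : EReal) :=
  map_sum (⟨⟨Real.toEReal, EReal.coe_zero⟩, EReal.coe_add⟩ : ℝ →+ EReal) f s

theorem stmt_16 {S A : Type*} [Fintype S] [Fintype A] [Nonempty S] [Nonempty A]
    [DecidableEq A]
    {d : ℕ} (φ : S → A → Fin d → ℝ) (γ : ℝ) (hγ : γ ∈ Set.Ioo (0 : ℝ) 1)
    (ε : ℝ) (hε : 0 < ε)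
    -- the MDP M : linear, reward distributions supported on [0,1]
    (p : S → A → S → ℝ) (r : S → A → ℝ)
    (hp0 : ∀ s a s', 0 ≤ p s a s') (hp1 : ∀ s a, ∑ s', p s a s' = 1)
    (θ : Fin d → ℝ) (μ : S → Fin d → ℝ)
    (hr : ∀ s a, r s a = φ s a ⬝ᵥ θ) (hP : ∀ s a s', p s a s' = φ s a ⬝ᵥ μ s')
    (q : S → A → Measure ℝ) (hq : ∀ s a, IsProbabilityMeasure (q s a))
    (hqsupp : ∀ s a, q s a (Set.Icc (0 : ℝ) 1)ᶜ = 0)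
    (hqmean : ∀ s a, (∫ x, x ∂q s a) = r s a)
    -- optimal value functions of M and its unique optimal policy
    (Vstar : S → ℝ) (Qstar : S → A → ℝ)
    (hQstar : ∀ s a, Qstar s a = r s a + γ * ∑ s', p s a s' * Vstar s')
    (hVstar : ∀ s, Vstar s = univ.sup' univ_nonempty fun a => Qstar s a)
    (πstar : S → A)
    (hπ : ∀ s a, a ≠ πstar s → Qstar s a < Qstar s (πstar s))
    -- the suboptimality gap of M
    (T : Finset (S × A)) (hTdef : T = univ.filter fun sa : S × A => sa.2 ≠ πstar sa.1)
    (hT : T.Nonempty)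
    -- the allocation ω, its feature matrix and σ(ω)
    (ω : S × A → ℝ) (hω0 : ∀ sa, 0 ≤ ω sa) (hω1 : ∑ sa, ω sa = 1)
    (Λω : Matrix (Fin d) (Fin d) ℝ)
    (hΛω : Λω = ∑ sa : S × A, ω sa • vecMulVec (φ sa.1 sa.2) (φ sa.1 sa.2))
    (hinv : IsUnit Λω)
    (σω : ℝ)
    (hσω : σω = univ.sup' univ_nonempty
      fun sa : S × A => φ sa.1 sa.2 ⬝ᵥ Λω⁻¹.mulVec (φ sa.1 sa.2)) :
    -- for every alternative linear MDP M' for which πstar is not ε-optimal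
    ∀ (p' : S → A → S → ℝ) (r' : S → A → ℝ),
      (∀ s a s', 0 ≤ p' s a s') → (∀ s a, ∑ s', p' s a s' = 1) →
      ∀ (θ' : Fin d → ℝ) (μ' : S → Fin d → ℝ),
      (∀ s a, r' s a = φ s a ⬝ᵥ θ') → (∀ s a s', p' s a s' = φ s a ⬝ᵥ μ' s') →
      ∀ q' : S → A → Measure ℝ,
      (∀ s a, IsProbabilityMeasure (q' s a)) →
      (∀ s a, q' s a (Set.Icc (0 : ℝ) 1)ᶜ = 0) →
      (∀ s a, (∫ x, x ∂q' s a) = r' s a) →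
      ∀ (V'star : S → ℝ) (Q'star : S → A → ℝ),
      (∀ s a, Q'star s a = r' s a + γ * ∑ s', p' s a s' * V'star s') →
      (∀ s, V'star s = univ.sup' univ_nonempty fun a => Q'star s a) →
      ∀ (Vpi' : S → ℝ) (Qpi' : S → A → ℝ),
      (∀ s a, Qpi' s a = r' s a + γ * ∑ s', p' s a s' * Vpi' s') →
      (∀ s, Vpi' s = Qpi' s (πstar s)) →
      (¬ ∀ s, V'star s - ε ≤ Vpi' s) →
      (((3 * (1 - γ) ^ 4 *
          (T.inf' hT (fun sa => Vstar sa.1 - Qstar sa.1 sa.2) + ε) ^ 2 /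
          (10 * σω) : ℝ) : EReal) ≤
        ∑ sa : S × A, ((ω sa : ℝ) : EReal) *
          (klDiv (q sa.1 sa.2) (q' sa.1 sa.2) +
            klFin (p sa.1 sa.2) (p' sa.1 sa.2))) := by
  intro p' r' hp'0 hp'1 θ' μ' hr' hP' q' hq' hq'supp hq'mean V'star Q'star hQ'star hV'star
    Vpi' Qpi' hQpi' hVpi' hnot
  have h0 : 0 < 1 - γ := by linarith [hγ.2]
  have hQV : ∀ s a, Qstar s a ≤ Vstar s := fun s a => by
    rw [hVstar]
    exact Finset.le_sup' (fun a => Qstar s a) (Finset.mem_univ a)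
  have hVπ : ∀ s, Vstar s = Qstar s (πstar s) := fun s => by
    refine le_antisymm ?_ (hQV _ _)
    rw [hVstar]
    refine Finset.sup'_le _ _ fun a _ => ?_
    rcases eq_or_ne a (πstar s) with h | h
    · rw [h]
    · exact (hπ s a h).le
  have hVmem : ∀ s, Vstar s ∈ Set.Icc 0 (1 - γ)⁻¹ :=
    value_mem_Icc hγ (fun s => p s (πstar s)) (fun _ _ => hp0 _ _ _) (fun _ => hp1 _ _)
      (fun s => r s (πstar s)) Vstar
      (fun s => by
        have := hq s (πstar s)
        rw [← hqmean]
        exact mean_mem_Icc _ (hqsupp _ _))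
      (fun s => by rw [hVπ s, hQstar])
  set Δ := T.inf' hT (fun sa => Vstar sa.1 - Qstar sa.1 sa.2) with hΔdef
  have hΔle : ∀ s a, a ≠ πstar s → Δ ≤ Vstar s - Qstar s a := fun s a ha =>
    Finset.inf'_le (fun sa : S × A => Vstar sa.1 - Qstar sa.1 sa.2) (b := (s, a))
      (by rw [hTdef]; simpa using ha)
  have hΔ0 : 0 ≤ Δ := Finset.le_inf' _ _ fun sa _ => sub_nonneg.2 (hQV _ _)
  -- The one-step Bellman error, and the vector `x` representing it in the features.
  set g : S × A → ℝ := fun sa => r sa.1 sa.2 - r' sa.1 sa.2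
    + γ * ∑ s', (p sa.1 sa.2 s' - p' sa.1 sa.2 s') * Vstar s' with hg
  set x : Fin d → ℝ := θ - θ' + γ • ∑ s', Vstar s' • (μ s' - μ' s') with hx
  have hgx : ∀ sa, g sa = φ sa.1 sa.2 ⬝ᵥ x := fun sa => by
    simp only [hg, hx, dotProduct_add, dotProduct_sub, dotProduct_smul, dotProduct_sum, hr, hr',
      hP, hP', smul_eq_mul]
    congr 2
    exact Finset.sum_congr rfl fun s' _ => by ring
  obtain ⟨m, hm⟩ := Finite.exists_max fun sa => |g sa|
  have hmain : (1 - γ) * (Δ + ε) ≤ 2 * |g m| :=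
    gap_add_le_bellman_error hγ hε p p' r r' hp'0 hp'1 Vstar Qstar hQstar hQV πstar hVπ Δ hΔle
      V'star Q'star hQ'star
      (fun s => by
        obtain ⟨a, _, ha⟩ := Finset.exists_mem_eq_sup' (Finset.univ_nonempty (α := A))
          (fun a => Q'star s a)
        exact ⟨a, by rw [hV'star s, ha]⟩)
      Vpi' (fun s => by rw [← hQpi', ← hVpi']) hnot |g m| (fun s a => hm (s, a))
  set E := ∑ sa, ω sa * g sa ^ 2 with hE
  have hE0 : 0 ≤ E := Finset.sum_nonneg fun sa _ => mul_nonneg (hω0 sa) (sq_nonneg _)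
  have hcs : g m ^ 2 ≤ σω * E := by
    have h1 := sq_dotProduct_le_design (fun sa : S × A => φ sa.1 sa.2) ω hω0 Λω hΛω hinv
      (φ m.1 m.2) x
    simp only [← hgx] at h1
    refine h1.trans (mul_le_mul_of_nonneg_right ?_ hE0)
    rw [hσω]
    exact Finset.le_sup' (fun sa : S × A => φ sa.1 sa.2 ⬝ᵥ Λω⁻¹.mulVec (φ sa.1 sa.2))
      (Finset.mem_univ m)
  have hsq : (1 - γ) ^ 2 * (Δ + ε) ^ 2 ≤ 4 * (σω * E) := by
    have h1 : 0 ≤ (1 - γ) * (Δ + ε) := by positivity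
    have h2 := pow_le_pow_left₀ h1 hmain 2
    rw [mul_pow, mul_pow, sq_abs] at h2
    linarith
  have hσ0 : 0 < σω := by
    have h1 : 0 < (1 - γ) ^ 2 * (Δ + ε) ^ 2 := by positivity
    by_contra! hneg
    have := mul_nonpos_of_nonpos_of_nonneg hneg hE0
    linarith
  have hreal : 3 * (1 - γ) ^ 4 * (Δ + ε) ^ 2 / (10 * σω)
      ≤ ∑ sa, ω sa * (2 * (1 - γ) ^ 2 * g sa ^ 2) := by
    have h1 : ∑ sa, ω sa * (2 * (1 - γ) ^ 2 * g sa ^ 2) = 2 * (1 - γ) ^ 2 * E := by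
      rw [hE, Finset.mul_sum]
      exact Finset.sum_congr rfl fun _ _ => by ring
    rw [h1, div_le_iff₀ (by positivity)]
    have h2 := mul_le_mul_of_nonneg_left hsq (sq_nonneg (1 - γ))
    have h3 : 0 ≤ (1 - γ) ^ 2 * (σω * E) := by positivity
    linarith
  refine (EReal.coe_le_coe_iff.2 hreal).trans ?_
  rw [ereal_coe_sum]
  refine Finset.sum_le_sum fun sa _ => ?_
  rw [EReal.coe_mul]
  refine mul_le_mul_of_nonneg_left ?_ (EReal.coe_nonneg.2 (hω0 sa))
  have := hq sa.1 sa.2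
  have := hq' sa.1 sa.2
  have hkl := sq_add_le_kl hγ (q sa.1 sa.2) (q' sa.1 sa.2) (hqsupp _ _) (hq'supp _ _)
    (p sa.1 sa.2) (p' sa.1 sa.2) Vstar (hp0 _ _) (hp1 _ _) (hp'0 _ _) (hp'1 _ _) hVmem
  rwa [hqmean, hq'mean] at hkl
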